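/- Let ν be a probability measure on {-1,1}^n satisfying ∇²L[ν](x) ⪯ β·diag(∇²L[ν](x)) for all x ∈ ℝ^n and some β ≥ 1. Then the sum of marginal entropies is at most β times the total entropy: Σ_{i∈[n]} H(πᵢ(ν)) ≤ β·H(ν). -/

import Mathlib

open Finset

/-- The embedding of a Boolean point into `{-1,1}^n ⊆ ℝ^n`. -/
noncomputable def vec {n : ℕ} (σ : Fin n → Bool) : Fin n → ℝ := fun i => if σ i then 1 else -1

/-- The log-Laplace transform of a (weighted) measure `ν` on the discrete cube. -/
noncomputable def LL {n : ℕ} (ν : (Fin n → Bool) → ℝ) (x : Fin n → ℝ) : ℝ :=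
  Real.log (∑ σ : Fin n → Bool, ν σ * Real.exp (∑ i, x i * vec σ i))

/-- The exponential tilt `τ_w ν` of `ν`, as a weight function on the cube. -/
noncomputable def tilt {n : ℕ} (ν : (Fin n → Bool) → ℝ) (w : Fin n → ℝ) (σ : Fin n → Bool) : ℝ :=
  ν σ * Real.exp (∑ i, w i * vec σ i) /
    ∑ τ : Fin n → Bool, ν τ * Real.exp (∑ i, w i * vec τ i)

/-- Barycenter (mean) of the tilted measure, `a_ν(w)`. -/
noncomputable def tmean {n : ℕ} (ν : (Fin n → Bool) → ℝ) (w : Fin n → ℝ) (i : Fin n) : ℝ :=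
  ∑ σ : Fin n → Bool, tilt ν w σ * vec σ i

/-- Covariance matrix of the tilted measure, `A_ν(w) = Cov(τ_w ν)`. -/
noncomputable def tcov {n : ℕ} (ν : (Fin n → Bool) → ℝ) (w : Fin n → ℝ) (i j : Fin n) : ℝ :=
  ∑ σ : Fin n → Bool, tilt ν w σ * (vec σ i - tmean ν w i) * (vec σ j - tmean ν w j)

/-- Partial derivative in the `i`-th coordinate direction. -/
noncomputable def pderiv' {n : ℕ} (f : (Fin n → ℝ) → ℝ) (i : Fin n) (x : Fin n → ℝ) : ℝ :=
  fderiv ℝ f x (Pi.single i 1)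

/-- Hessian matrix entry `∂ᵢ∂ⱼ f (x)`. -/
noncomputable def hess {n : ℕ} (f : (Fin n → ℝ) → ℝ) (x : Fin n → ℝ) (i j : Fin n) : ℝ :=
  pderiv' (pderiv' f j) i x

/-!
The Hessian of `LL ν` at `x` is the covariance matrix of the tilt `τ_x ν`. Hence the hypothesis says
that, under every tilt, the variance of an additive function `∑ᵢ rᵢ(σᵢ)` is at most `β` times the
mean of `∑ᵢ rᵢ(σᵢ)²`, which makes `ν` fractionally log-concave: the function
`z ↦ log ∑_σ ν(σ) ∏ᵢ zᵢ(σᵢ)^(1/β)` is concave along segments of the positive orthant. Comparing it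
with its tangent at `z = 1`, and letting `zᵢ` tend to the indicator of `σᵢ` divided by `πᵢ(ν)(σᵢ)`,
gives the pointwise bound `ν(σ)^β ≤ ∏ᵢ πᵢ(ν)(σᵢ)`. The entropy inequality is the `ν`-average of its
logarithm.
-/

section Gibbs

open Real

variable {Ω : Type*} [Fintype Ω] {ν p : Ω → ℝ}

lemma dotProduct_fun_const_mul (p f : Ω → ℝ) (c : ℝ) : (p ⬝ᵥ fun ω => c * f ω) = c * (p ⬝ᵥ f) :=
  dotProduct_smul c p f

lemma dotProduct_fun_const_add (hp : ∑ ω, p ω = 1) (f : Ω → ℝ) (c : ℝ) :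
    (p ⬝ᵥ fun ω => c + f ω) = c + p ⬝ᵥ f := by
  simp only [dotProduct, mul_add, sum_add_distrib, ← sum_mul, hp, one_mul]

lemma dotProduct_fun_sum {ι : Type*} [Fintype ι] (p : Ω → ℝ) (f : ι → Ω → ℝ) :
    (p ⬝ᵥ fun ω => ∑ i, f i ω) = ∑ i, p ⬝ᵥ f i := by
  rw [← sum_fn, dotProduct_sum]

/-- The covariance of `f` and `g` under the probability vector `p`, under which the expectation
of `f` is `p ⬝ᵥ f`. -/
noncomputable def cov (p f g : Ω → ℝ) : ℝ :=
  ∑ ω, p ω * (f ω - p ⬝ᵥ f) * (g ω - p ⬝ᵥ g)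

/-- The partition function of the reference weights `ν` with log-density `ℓ₀`. -/
noncomputable def partitionFn (ν ℓ₀ : Ω → ℝ) : ℝ := ∑ ω, ν ω * exp (ℓ₀ ω)

/-- The Gibbs measure with reference weights `ν` and log-density `ℓ₀`; the exponential tilts are
the case of a linear `ℓ₀`. -/
noncomputable def gibbs (ν ℓ₀ : Ω → ℝ) (ω : Ω) : ℝ := ν ω * exp (ℓ₀ ω) / partitionFn ν ℓ₀

lemma pos_of_mem_stdSimplex (hν : ν ∈ stdSimplex ℝ Ω) : 0 < ν := by
  refine lt_of_le_of_ne hν.1 ?_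
  rintro rfl
  simpa using hν.2

lemma partitionFn_pos (hν : 0 < ν) (ℓ₀ : Ω → ℝ) : 0 < partitionFn ν ℓ₀ := by
  obtain ⟨hν₀, ω, hω⟩ := Pi.lt_def.1 hν
  exact sum_pos' (fun ω _ => mul_nonneg (hν₀ ω) (exp_pos _).le)
    ⟨ω, mem_univ ω, mul_pos hω (exp_pos _)⟩

lemma log_add_le_log_partitionFn (hν : 0 ≤ ν) (ℓ₀ : Ω → ℝ) {ω : Ω} (hω : 0 < ν ω) :
    log (ν ω) + ℓ₀ ω ≤ log (partitionFn ν ℓ₀) := by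
  have hsingle : ν ω * exp (ℓ₀ ω) ≤ partitionFn ν ℓ₀ :=
    single_le_sum (f := fun ω => ν ω * exp (ℓ₀ ω))
      (fun ω _ => mul_nonneg (hν ω) (exp_pos _).le) (mem_univ ω)
  calc
    log (ν ω) + ℓ₀ ω = log (ν ω * exp (ℓ₀ ω)) := by
      rw [log_mul hω.ne' (exp_pos _).ne', log_exp]
    _ ≤ log (partitionFn ν ℓ₀) := log_le_log (mul_pos hω (exp_pos _)) hsingle

lemma partitionFn_zero (hν : ∑ ω, ν ω = 1) : partitionFn ν 0 = 1 := by
  simpa [partitionFn] using hν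

lemma gibbs_zero (hν : ∑ ω, ν ω = 1) : gibbs ν 0 = ν := by
  ext ω
  simp [gibbs, partitionFn_zero hν]

lemma gibbs_mem_stdSimplex (hν : 0 < ν) (ℓ₀ : Ω → ℝ) : gibbs ν ℓ₀ ∈ stdSimplex ℝ Ω :=
  ⟨fun ω => div_nonneg (mul_nonneg (hν.le ω) (exp_pos _).le) (partitionFn_pos hν ℓ₀).le,
    by simp only [gibbs, ← sum_div]; exact div_self (partitionFn_pos hν ℓ₀).ne'⟩

lemma gibbs_const_add (ν ℓ₀ : Ω → ℝ) (c : ℝ) : gibbs ν (fun ω => c + ℓ₀ ω) = gibbs ν ℓ₀ := by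
  ext ω
  simp only [gibbs, partitionFn, exp_add, mul_left_comm _ (exp c), ← mul_sum]
  exact mul_div_mul_left _ _ (exp_pos c).ne'

lemma cov_eq_sum_mul_sub (hp : ∑ ω, p ω = 1) (f g : Ω → ℝ) :
    cov p f g = ∑ ω, p ω * (f ω - p ⬝ᵥ f) * g ω := by
  have hcentered : ∑ ω, p ω * (f ω - p ⬝ᵥ f) = 0 := by
    simp only [mul_sub, sum_sub_distrib, ← sum_mul, hp, one_mul]
    exact sub_self _
  simp only [cov, mul_sub _ (g _), sum_sub_distrib, ← sum_mul, hcentered, zero_mul, sub_zero]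

lemma cov_self_le_dotProduct_sq (hp : ∑ ω, p ω = 1) (f : Ω → ℝ) :
    cov p f f ≤ p ⬝ᵥ fun ω => f ω ^ 2 := by
  have hvar : cov p f f = (p ⬝ᵥ fun ω => f ω ^ 2) - (p ⬝ᵥ f) * (p ⬝ᵥ f) := calc
    cov p f f = ∑ ω, (p ω * f ω ^ 2 - (p ⬝ᵥ f) * (p ω * f ω)) := by
      rw [cov_eq_sum_mul_sub hp]
      exact sum_congr rfl fun ω _ => by ring
    _ = (p ⬝ᵥ fun ω => f ω ^ 2) - (p ⬝ᵥ f) * (p ⬝ᵥ f) := by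
      rw [sum_sub_distrib, ← mul_sum]
      rfl
  linarith [mul_self_nonneg (p ⬝ᵥ f)]

lemma cov_const_mul (p f g : Ω → ℝ) (c d : ℝ) :
    cov p (fun ω => c * f ω) (fun ω => d * g ω) = c * d * cov p f g := by
  simp only [cov, dotProduct_fun_const_mul, mul_sum]
  exact sum_congr rfl fun ω _ => by ring

lemma cov_const_add (hp : ∑ ω, p ω = 1) (f g : Ω → ℝ) (c d : ℝ) :
    cov p (fun ω => c + f ω) (fun ω => d + g ω) = cov p f g := by
  simp only [cov, dotProduct_fun_const_add hp, add_sub_add_left_eq_sub]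

lemma cov_sum_sum {ι κ : Type*} [Fintype ι] [Fintype κ] (p : Ω → ℝ) (f : ι → Ω → ℝ)
    (g : κ → Ω → ℝ) :
    cov p (fun ω => ∑ i, f i ω) (fun ω => ∑ j, g j ω) = ∑ i, ∑ j, cov p (f i) (g j) := by
  simp only [cov, dotProduct_fun_sum, ← sum_sub_distrib, mul_assoc, sum_mul_sum]
  simp only [mul_sum]
  rw [sum_comm]
  exact sum_congr rfl fun i _ => sum_comm

variable {ℓ ℓ' ℓ'' : ℝ → Ω → ℝ} {F : ℝ → Ω → ℝ} {v F' : Ω → ℝ} {t : ℝ}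

lemma hasDerivAt_partitionFn (ν : Ω → ℝ) (hℓ : HasDerivAt ℓ v t) :
    HasDerivAt (fun s => partitionFn ν (ℓ s)) (∑ ω, ν ω * exp (ℓ t ω) * v ω) t := by
  refine HasDerivAt.fun_sum fun ω _ => ?_
  simpa only [mul_assoc] using (hasDerivAt_pi.1 hℓ ω).exp.const_mul (ν ω)

lemma hasDerivAt_log_partitionFn (hν : 0 < ν) (hℓ : HasDerivAt ℓ v t) :
    HasDerivAt (fun s => log (partitionFn ν (ℓ s))) (gibbs ν (ℓ t) ⬝ᵥ v) t := by
  refine ((hasDerivAt_partitionFn ν hℓ).log (partitionFn_pos hν _).ne').congr_deriv ?_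
  simp only [dotProduct, gibbs, sum_div, div_mul_eq_mul_div]

lemma hasDerivAt_gibbs (hν : 0 < ν) (hℓ : HasDerivAt ℓ v t) (ω : Ω) :
    HasDerivAt (fun s => gibbs ν (ℓ s) ω)
      (gibbs ν (ℓ t) ω * (v ω - gibbs ν (ℓ t) ⬝ᵥ v)) t := by
  have hZ := (partitionFn_pos hν (ℓ t)).ne'
  have hmean : gibbs ν (ℓ t) ⬝ᵥ v = (∑ ω, ν ω * exp (ℓ t ω) * v ω) / partitionFn ν (ℓ t) := by
    simp only [dotProduct, gibbs, sum_div, div_mul_eq_mul_div]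
  refine (((hasDerivAt_pi.1 hℓ ω).exp.const_mul (ν ω)).fun_div
    (hasDerivAt_partitionFn ν hℓ) hZ).congr_deriv ?_
  rw [hmean, gibbs]
  field_simp

lemma hasDerivAt_gibbs_dotProduct (hν : 0 < ν) (hℓ : HasDerivAt ℓ v t)
    (hF : HasDerivAt F F' t) :
    HasDerivAt (fun s => gibbs ν (ℓ s) ⬝ᵥ F s)
      (cov (gibbs ν (ℓ t)) v (F t) + gibbs ν (ℓ t) ⬝ᵥ F') t := by
  rw [cov_eq_sum_mul_sub (gibbs_mem_stdSimplex hν _).2]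
  refine (HasDerivAt.fun_sum fun ω _ =>
    (hasDerivAt_gibbs hν hℓ ω).fun_mul (hasDerivAt_pi.1 hF ω)).congr_deriv ?_
  exact sum_add_distrib ..

lemma concaveOn_log_partitionFn {s : Set ℝ} (hs : Convex ℝ s) (hν : 0 < ν)
    (hℓ : ∀ t ∈ s, HasDerivAt ℓ (ℓ' t) t) (hℓ' : ∀ t ∈ s, HasDerivAt ℓ' (ℓ'' t) t)
    (h : ∀ t ∈ s, cov (gibbs ν (ℓ t)) (ℓ' t) (ℓ' t) + gibbs ν (ℓ t) ⬝ᵥ ℓ'' t ≤ 0) :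
    ConcaveOn ℝ s fun t => log (partitionFn ν (ℓ t)) := by
  have hsub : interior s ⊆ s := interior_subset
  refine concaveOn_of_hasDerivWithinAt2_nonpos
    (f' := fun t => gibbs ν (ℓ t) ⬝ᵥ ℓ' t) hs ?_ ?_ ?_ fun t ht => h t (hsub ht)
  · exact fun t ht => (hasDerivAt_log_partitionFn hν (hℓ t ht)).continuousAt.continuousWithinAt
  · exact fun t ht => (hasDerivAt_log_partitionFn hν (hℓ t (hsub ht))).hasDerivWithinAt
  · exact fun t ht => (hasDerivAt_gibbs_dotProduct hν (hℓ t (hsub ht))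
      (hℓ' t (hsub ht))).hasDerivWithinAt

end Gibbs

section Marginal

variable {ι α : Type*} [Fintype ι] [DecidableEq ι] [Fintype α] [DecidableEq α]

/-- The `i`-th marginal `πᵢ(ν)` of the weights `ν` on a product space, as a weight function. -/
def marginal (ν : (ι → α) → ℝ) (i : ι) (a : α) : ℝ := ∑ σ, if σ i = a then ν σ else 0

lemma dotProduct_apply_eq_marginal_dotProduct (ν : (ι → α) → ℝ) (i : ι) (g : α → ℝ) :
    (ν ⬝ᵥ fun σ => g (σ i)) = marginal ν i ⬝ᵥ g := by
  simp only [dotProduct, marginal, sum_mul, ite_mul, zero_mul]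
  rw [sum_comm]
  simp only [sum_ite_eq, mem_univ, if_true]

lemma marginal_pos {ν : (ι → α) → ℝ} (hν : 0 ≤ ν) {σ : ι → α} (hσ : 0 < ν σ) (i : ι) :
    0 < marginal ν i (σ i) :=
  sum_pos' (fun τ _ => by split_ifs; exacts [hν τ, le_rfl]) ⟨σ, mem_univ σ, by simpa using hσ⟩

lemma sum_marginal (ν : (ι → α) → ℝ) (i : ι) : ∑ a, marginal ν i a = ∑ σ, ν σ := by
  simpa [dotProduct] using (dotProduct_apply_eq_marginal_dotProduct ν i 1).symm

end Marginal

section Cube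

open Real

variable {n : ℕ} {ν : (Fin n → Bool) → ℝ} {β : ℝ}

lemma hasDerivAt_linear_vec (x : Fin n → ℝ) (i : Fin n) :
    HasDerivAt (fun (t : ℝ) (σ : Fin n → Bool) =>
      ∑ k, (x + t • (Pi.single i 1 : Fin n → ℝ)) k * vec σ k) (fun σ => vec σ i) 0 := by
  refine hasDerivAt_pi.2 fun σ => ?_
  have hline (t : ℝ) : ∑ k, (x + t • (Pi.single i 1 : Fin n → ℝ)) k * vec σ k
      = ∑ k, x k * vec σ k + t * vec σ i := by
    simp [add_mul, sum_add_distrib, Pi.single_apply]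
  simpa only [hline, id, one_mul] using
    ((hasDerivAt_id (0 : ℝ)).mul_const (vec σ i)).const_add (∑ k, x k * vec σ k)

lemma pderiv'_LL (hν : 0 < ν) (j : Fin n) : pderiv' (LL ν) j = fun x => tmean ν x j := by
  ext x
  have hdiff : DifferentiableAt ℝ (LL ν) x :=
    DifferentiableAt.log (by fun_prop) (partitionFn_pos hν _).ne'
  rw [pderiv', ← hdiff.lineDeriv_eq_fderiv]
  simpa using! (hasDerivAt_log_partitionFn hν (hasDerivAt_linear_vec x j)).deriv

lemma hess_LL (hν : 0 < ν) (x : Fin n → ℝ) (i j : Fin n) : hess (LL ν) x i j = tcov ν x i j := by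
  have hdiff : DifferentiableAt ℝ (fun x => tmean ν x j) x := by
    unfold tmean tilt
    have hZ (y : Fin n → ℝ) := (partitionFn_pos hν fun σ => ∑ i, y i * vec σ i).ne'
    unfold partitionFn at hZ
    fun_prop (disch := exact hZ _)
  rw [hess, pderiv'_LL hν, pderiv', ← hdiff.lineDeriv_eq_fderiv]
  simpa using! (hasDerivAt_gibbs_dotProduct hν (hasDerivAt_linear_vec x i)
    (hasDerivAt_const 0 fun σ => vec σ j)).deriv

/-- The Loewner bound `Cov(τ_x ν) ⪯ β · diag(Cov(τ_x ν))` for every exponential tilt of `ν`. -/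
def TiltCovLEDiag (ν : (Fin n → Bool) → ℝ) (β : ℝ) : Prop :=
  ∀ x u : Fin n → ℝ, ∑ i, ∑ j, u i * tcov ν x i j * u j ≤ β * ∑ i, tcov ν x i i * u i ^ 2

lemma exists_apply_eq_const_add_mul_vec (f : Fin n → Bool → ℝ) :
    ∃ c u : Fin n → ℝ, ∀ (σ : Fin n → Bool) (i : Fin n), f i (σ i) = c i + u i * vec σ i := by
  refine ⟨fun i => (f i true + f i false) / 2, fun i => (f i true - f i false) / 2, fun σ i => ?_⟩
  unfold vec
  cases σ i
  · simp only [Bool.false_eq_true, if_false]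
    ring
  · simp only [if_true]
    ring

lemma exists_gibbs_eq_tilt (ν : (Fin n → Bool) → ℝ) (a : Fin n → Bool → ℝ) :
    ∃ x, gibbs ν (fun σ => ∑ i, a i (σ i)) = tilt ν x := by
  obtain ⟨c, x, ha⟩ := exists_apply_eq_const_add_mul_vec a
  refine ⟨x, ?_⟩
  simp only [ha, sum_add_distrib]
  exact gibbs_const_add ν _ _

lemma cov_tilt_sum_le (hν : 0 < ν) (hβ : 0 ≤ β) (h : TiltCovLEDiag ν β) (x : Fin n → ℝ)
    (r : Fin n → Bool → ℝ) :
    cov (tilt ν x) (fun σ => ∑ i, r i (σ i)) (fun σ => ∑ i, r i (σ i))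
      ≤ β * (tilt ν x ⬝ᵥ fun σ => ∑ i, r i (σ i) ^ 2) := by
  have hp : ∑ σ, tilt ν x σ = 1 := (gibbs_mem_stdSimplex hν _).2
  obtain ⟨c, u, hr⟩ := exists_apply_eq_const_add_mul_vec r
  have hvar (i : Fin n) :
      tcov ν x i i * u i ^ 2 ≤ tilt ν x ⬝ᵥ fun σ => r i (σ i) ^ 2 := calc
    tcov ν x i i * u i ^ 2 = cov (tilt ν x) (fun σ => r i (σ i)) (fun σ => r i (σ i)) := by
      simp only [hr, cov_const_add hp, cov_const_mul]
      rw [mul_comm, sq]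
      rfl
    _ ≤ tilt ν x ⬝ᵥ fun σ => r i (σ i) ^ 2 := cov_self_le_dotProduct_sq hp _
  calc
    cov (tilt ν x) (fun σ => ∑ i, r i (σ i)) (fun σ => ∑ i, r i (σ i))
        = ∑ i, ∑ j, u i * tcov ν x i j * u j := by
      simp only [hr, cov_sum_sum, cov_const_add hp, cov_const_mul, mul_right_comm (u _)]
      rfl
    _ ≤ β * ∑ i, tcov ν x i i * u i ^ 2 := h x u
    _ ≤ β * (tilt ν x ⬝ᵥ fun σ => ∑ i, r i (σ i) ^ 2) := by
      rw [dotProduct_fun_sum]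
      gcongr with i
      exact hvar i

/-- The logarithm of the monomial `∏ᵢ zᵢ(σᵢ)^(1/β)`, for positive `z`. With it as log-density, the
partition function of `ν` is the generating polynomial of `ν` evaluated at `z^(1/β)`. -/
noncomputable def logMonomial (β : ℝ) (z : Fin n → Bool → ℝ) (σ : Fin n → Bool) : ℝ :=
  ∑ i, β⁻¹ * log (z i (σ i))

lemma hasDerivAt_add_smul_apply (z d : Fin n → Bool → ℝ) (t : ℝ) (i : Fin n) (b : Bool) :
    HasDerivAt (fun s : ℝ => (z + s • d) i b) (d i b) t := by
  simpa using ((hasDerivAt_id t).mul_const (d i b)).const_add (z i b)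

lemma hasDerivAt_logMonomial (β : ℝ) (z d : Fin n → Bool → ℝ) {t : ℝ}
    (hpos : ∀ i b, 0 < (z + t • d) i b) :
    HasDerivAt (fun s : ℝ => logMonomial β (z + s • d))
      (fun σ => ∑ i, β⁻¹ * (d i (σ i) / (z + t • d) i (σ i))) t := by
  refine hasDerivAt_pi.2 fun σ => HasDerivAt.fun_sum fun i _ => ?_
  exact ((hasDerivAt_add_smul_apply z d t i (σ i)).log (hpos i (σ i)).ne').const_mul β⁻¹

lemma hasDerivAt_deriv_logMonomial (hβ : β ≠ 0) (z d : Fin n → Bool → ℝ) {t : ℝ}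
    (hpos : ∀ i b, 0 < (z + t • d) i b) :
    HasDerivAt (fun (s : ℝ) (σ : Fin n → Bool) => ∑ i, β⁻¹ * (d i (σ i) / (z + s • d) i (σ i)))
      (fun σ => -β * ∑ i, (β⁻¹ * (d i (σ i) / (z + t • d) i (σ i))) ^ 2) t := by
  simp only [mul_sum]
  refine hasDerivAt_pi.2 fun σ => HasDerivAt.fun_sum fun i _ => ?_
  have hz := (hpos i (σ i)).ne'
  refine (((hasDerivAt_const t _).fun_div (hasDerivAt_add_smul_apply z d t i (σ i))
    hz).const_mul β⁻¹).congr_deriv ?_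
  field_simp
  ring

lemma concaveOn_log_partitionFn_logMonomial (hν : 0 < ν) (hβ : 0 < β) (h : TiltCovLEDiag ν β)
    (z d : Fin n → Bool → ℝ) {s : Set ℝ} (hs : Convex ℝ s)
    (hpos : ∀ t ∈ s, ∀ i b, 0 < (z + t • d) i b) :
    ConcaveOn ℝ s fun t => log (partitionFn ν (logMonomial β (z + t • d))) := by
  refine concaveOn_log_partitionFn hs hν
    (fun t ht => hasDerivAt_logMonomial β z d (hpos t ht))
    (fun t ht => hasDerivAt_deriv_logMonomial hβ.ne' z d (hpos t ht)) fun t _ => ?_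
  obtain ⟨x, hx⟩ := exists_gibbs_eq_tilt ν fun i b => β⁻¹ * log ((z + t • d) i b)
  have hvar := cov_tilt_sum_le hν hβ.le h x fun i b => β⁻¹ * (d i b / (z + t • d) i b)
  unfold logMonomial
  rw [hx, dotProduct_fun_const_mul]
  linarith

lemma logMonomial_one (β : ℝ) : logMonomial (n := n) β 1 = 0 := by
  ext σ
  simp [logMonomial]

-- The right-hand side is the tangent of the concave left-hand side at `z = 1`.
lemma log_partitionFn_logMonomial_le (hν : ν ∈ stdSimplex ℝ (Fin n → Bool)) (hβ : 0 < β)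
    (h : TiltCovLEDiag ν β) {z : Fin n → Bool → ℝ} (hz : ∀ i b, 0 < z i b) :
    log (partitionFn ν (logMonomial β z)) ≤ β⁻¹ * ∑ i, ((ν ⬝ᵥ fun σ => z i (σ i)) - 1) := by
  have hν₀ := pos_of_mem_stdSimplex hν
  have hpos : ∀ t ∈ Set.Icc (0 : ℝ) 1, ∀ i b, 0 < ((1 : Fin n → Bool → ℝ) + t • (z - 1)) i b :=
    fun t ht i b => (convex_Ioi (0 : ℝ)).add_smul_sub_mem (Set.mem_Ioi.2 one_pos) (hz i b) ht
  have h0 : (0 : ℝ) ∈ Set.Icc 0 1 := Set.left_mem_Icc.2 zero_le_one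
  have h1 : (1 : ℝ) ∈ Set.Icc 0 1 := Set.right_mem_Icc.2 zero_le_one
  have hderiv := hasDerivAt_log_partitionFn hν₀ (hasDerivAt_logMonomial β 1 (z - 1) (hpos 0 h0))
  have hslope := (concaveOn_log_partitionFn_logMonomial hν₀ hβ h 1 (z - 1)
    (convex_Icc 0 1) hpos).slope_le_of_hasDerivAt h0 h1 one_pos hderiv
  have hmean : (ν ⬝ᵥ fun σ => ∑ i, β⁻¹ * (z i (σ i) - 1))
      = β⁻¹ * ∑ i, ((ν ⬝ᵥ fun σ => z i (σ i)) - 1) := by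
    rw [dotProduct_fun_sum, mul_sum]
    refine sum_congr rfl fun i _ => ?_
    rw [dotProduct_fun_const_mul]
    simp only [dotProduct, mul_sub_one, sum_sub_distrib, hν.2]
  simpa [slope_def_field, logMonomial_one, gibbs_zero hν.2, partitionFn_zero hν.2, hmean]
    using hslope

lemma mul_log_add_sum_log_le (hν : ν ∈ stdSimplex ℝ (Fin n → Bool)) (hβ : 0 < β)
    (h : TiltCovLEDiag ν β) {z : Fin n → Bool → ℝ} (hz : ∀ i b, 0 < z i b) {σ : Fin n → Bool}
    (hσ : 0 < ν σ) :
    β * log (ν σ) + ∑ i, log (z i (σ i)) ≤ ∑ i, ((ν ⬝ᵥ fun τ => z i (τ i)) - 1) := by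
  have hlog := (log_add_le_log_partitionFn hν.1 (logMonomial β z) hσ).trans
    (log_partitionFn_logMonomial_le hν hβ h hz)
  rwa [logMonomial, ← mul_sum, le_inv_mul_iff₀ hβ, mul_add, mul_inv_cancel_left₀ hβ.ne'] at hlog

lemma mul_log_le_sum_log_marginal (hν : ν ∈ stdSimplex ℝ (Fin n → Bool)) (hβ : 0 < β)
    (h : TiltCovLEDiag ν β) {σ : Fin n → Bool} (hσ : 0 < ν σ) :
    β * log (ν σ) ≤ ∑ i, log (marginal ν i (σ i)) := by
  refine le_of_forall_pos_le_add fun δ hδ => ?_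
  have hq := marginal_pos hν.1 hσ
  obtain ⟨ε, hε, hnε⟩ : ∃ ε > 0, n * ε ≤ δ := by
    refine ⟨δ / (n + 1), by positivity, ?_⟩
    rw [mul_div_left_comm]
    exact mul_le_of_le_one_right hδ.le (div_le_one_of_le₀ (by simp) (by positivity))
  -- The optimal `z` is the indicator of `σ` over the marginals, perturbed by `ε` to be positive.
  set z : Fin n → Bool → ℝ :=
    fun i b => (Pi.single (σ i) (marginal ν i (σ i))⁻¹ : Bool → ℝ) b + ε with hz
  have hz_pos (i b) : 0 < z i b := by
    have hsingle : (0 : Bool → ℝ) ≤ Pi.single (σ i) (marginal ν i (σ i))⁻¹ :=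
      Pi.single_nonneg.2 (inv_pos.2 (hq i)).le
    exact add_pos_of_nonneg_of_pos (hsingle b) hε
  have hmean (i) : (ν ⬝ᵥ fun τ => z i (τ i)) = 1 + ε := by
    calc
      (ν ⬝ᵥ fun τ => z i (τ i)) = marginal ν i ⬝ᵥ z i :=
        dotProduct_apply_eq_marginal_dotProduct ν i (z i)
      _ = marginal ν i ⬝ᵥ Pi.single (σ i) (marginal ν i (σ i))⁻¹ + (∑ b, marginal ν i b) * ε := by
        simp only [hz, dotProduct, mul_add, sum_add_distrib, sum_mul]
      _ = 1 + ε := by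
        rw [dotProduct_single, mul_inv_cancel₀ (hq i).ne', sum_marginal, hν.2, one_mul]
  have hz_log (i) : -log (marginal ν i (σ i)) ≤ log (z i (σ i)) := by
    rw [← log_inv]
    refine log_le_log (inv_pos.2 (hq i)) ?_
    simp [hz, hε.le]
  have hbound : β * log (ν σ) + ∑ i, log (z i (σ i)) ≤ n * ε := by
    simpa [hmean] using mul_log_add_sum_log_le hν hβ h hz_pos hσ
  have hz_sum : -∑ i, log (marginal ν i (σ i)) ≤ ∑ i, log (z i (σ i)) := by
    rw [← sum_neg_distrib]
    exact sum_le_sum fun i _ => hz_log i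
  linarith

lemma sum_negMulLog_marginal_le (hν : ν ∈ stdSimplex ℝ (Fin n → Bool)) (hβ : 0 < β)
    (h : TiltCovLEDiag ν β) :
    ∑ i, ∑ b, negMulLog (marginal ν i b) ≤ β * ∑ σ, negMulLog (ν σ) := by
  have hlog (σ : Fin n → Bool) :
      β * (ν σ * log (ν σ)) ≤ ν σ * ∑ i, log (marginal ν i (σ i)) := by
    obtain hσ | hσ := (hν.1 σ).eq_or_lt
    · simp [← hσ]
    · rw [mul_left_comm]
      exact mul_le_mul_of_nonneg_left (mul_log_le_sum_log_marginal hν hβ h hσ) hσ.le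
  have hsum : ∑ σ, β * (ν σ * log (ν σ)) ≤ ∑ i, ∑ b, marginal ν i b * log (marginal ν i b) := calc
    ∑ σ, β * (ν σ * log (ν σ)) ≤ ∑ σ, ν σ * ∑ i, log (marginal ν i (σ i)) :=
      sum_le_sum fun σ _ => hlog σ
    _ = ∑ i, ν ⬝ᵥ fun σ => log (marginal ν i (σ i)) :=
      dotProduct_fun_sum ν fun i σ => log (marginal ν i (σ i))
    _ = ∑ i, ∑ b, marginal ν i b * log (marginal ν i b) :=
      sum_congr rfl fun i _ =>
        dotProduct_apply_eq_marginal_dotProduct ν i fun b => log (marginal ν i b)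
  simp only [negMulLog, neg_mul, sum_neg_distrib, mul_neg, mul_sum]
  exact neg_le_neg hsum

end Cube

/-- If `∇²L[ν](x) ⪯ β · diag(∇²L[ν](x))` for all `x` and some `β ≥ 1`, then the sum of the
marginal entropies is at most `β` times the entropy of `ν`: `∑ᵢ H(πᵢ(ν)) ≤ β · H(ν)`. -/
theorem stmt19 {n : ℕ} (ν : (Fin n → Bool) → ℝ)
    (hν0 : ∀ σ, 0 ≤ ν σ) (hν1 : ∑ σ : Fin n → Bool, ν σ = 1)
    (β : ℝ) (hβ : 1 ≤ β)
    (hcond : ∀ x : Fin n → ℝ, ∀ u : Fin n → ℝ,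
      (∑ i, ∑ j, u i * hess (LL ν) x i j * u j) ≤ β * ∑ i, hess (LL ν) x i i * (u i) ^ 2)
    (p : Fin n → ℝ) (hp : ∀ i, p i = ∑ σ : Fin n → Bool, if σ i then ν σ else 0) :
    (∑ i, (-(p i * Real.log (p i)) - (1 - p i) * Real.log (1 - p i)))
      ≤ β * ∑ σ : Fin n → Bool, -(ν σ * Real.log (ν σ)) := by
  have hν : ν ∈ stdSimplex ℝ (Fin n → Bool) := ⟨hν0, hν1⟩
  have hcov : TiltCovLEDiag ν β := by
    intro x u
    simpa only [hess_LL (pos_of_mem_stdSimplex hν)] using hcond x u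
  have hp_true (i) : marginal ν i true = p i := (hp i).symm
  have hp_false (i) : marginal ν i false = 1 - p i := by
    rw [← hp_true, ← hν1, ← sum_marginal ν i, Fintype.sum_bool, add_sub_cancel_left]
  have hentropy := sum_negMulLog_marginal_le hν (one_pos.trans_le hβ) hcov
  simpa only [Fintype.sum_bool, hp_true, hp_false, Real.negMulLog, neg_mul, ← sub_eq_add_neg]
    using hentropy
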